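/- Let O be the origin of ℝ² and let P, P' ∈ ℝ² be such that O, P, P' are not collinear (i.e. P and P' are linearly independent over ℝ). Let J = { Q ∈ ℝ² : ‖Q‖² ∈ ℚ, ‖Q−P‖² ∈ ℚ, ‖Q−P'‖² ∈ ℚ }. Then J is Zariski-dense in ℝ² if and only if ‖P‖², ⟨P,P'⟩ and ‖P'‖² are all rational. Moreover, if these rationality conditions hold, then: J = { t·P + u·P' : t, u ∈ ℚ }; there exists R ∈ J with ⟨P,R⟩ = 0, ‖R‖² ∈ ℚ and J = { t·P + u·R : t, u ∈ ℚ }; and ‖Q − Q'‖² ∈ ℚ for all Q, Q' ∈ J. -/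

import Mathlib

/-!
Write `p = ‖P‖²`, `q = ‖P'‖²`, `s = ⟪P, P'⟫` and `D = p q - s² > 0` (the Gram determinant).

*Density forces rationality.* For `Q ∈ J` the numbers `r₁ = ⟪Q, P⟫ - p/2`, `r₂ = ⟪Q, P'⟫ - q/2` and
`‖Q‖²` are rational, by polarization, and the Gram relation reads
`D ‖Q‖² = q (r₁ + p/2)² - 2 s (r₁ + p/2) (r₂ + q/2) + p (r₂ + q/2)²`.
So a real polynomial of degree two in `(r₁, r₂)` takes rational values on a Zariski-dense set of
rational points, and its coefficients must be rational (`coeff_isRat`): a `ℚ`-linear functional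
`φ : ℝ → ℚ` killing `1`, applied to the coefficients, gives a polynomial vanishing on that set, so
`φ` kills each coefficient, and such functionals detect irrationality. Hence `q/D`, `s/D`, `p/D`,
`q (p - s)/D` and `p (q - s)/D` are rational. Then so are `p - s`, `q - s` and their sum
`‖P - P'‖² ≠ 0`; dividing it by the rational number `(p + q - 2 s)/D` shows that `D` is
rational, and so are `p`, `q`, `s`.

*Conversely*, Cramer's rule for the Gram matrix gives `J = ℚ P + ℚ P'` (`mem_iff_rat_comb`), which is
topologically dense, so a polynomial vanishing on `J` vanishes everywhere. The vector `R` is the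
component `P' - (s/p) P` of `P'` orthogonal to `P`.
-/

open scoped RealInnerProductSpace

noncomputable section

/-- A real number is rational. -/
def IsRat (x : ℝ) : Prop := ∃ q : ℚ, (q : ℝ) = x

/-- A subset of the plane is Zariski-dense if the only real polynomial in two
variables vanishing identically on it is the zero polynomial. -/
def ZariskiDense (S : Set (EuclideanSpace ℝ (Fin 2))) : Prop :=
  ∀ f : MvPolynomial (Fin 2) ℝ,
    (∀ Q ∈ S, MvPolynomial.eval (fun i => Q i) f = 0) → f = 0

lemma isRat_cast (q : ℚ) : IsRat (q : ℝ) := ⟨q, rfl⟩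

lemma IsRat.add {x y : ℝ} (hx : IsRat x) (hy : IsRat y) : IsRat (x + y) := by
  obtain ⟨a, rfl⟩ := hx
  obtain ⟨b, rfl⟩ := hy
  exact ⟨a + b, by push_cast; rfl⟩

lemma IsRat.sub {x y : ℝ} (hx : IsRat x) (hy : IsRat y) : IsRat (x - y) := by
  obtain ⟨a, rfl⟩ := hx
  obtain ⟨b, rfl⟩ := hy
  exact ⟨a - b, by push_cast; rfl⟩

lemma IsRat.mul {x y : ℝ} (hx : IsRat x) (hy : IsRat y) : IsRat (x * y) := by
  obtain ⟨a, rfl⟩ := hx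
  obtain ⟨b, rfl⟩ := hy
  exact ⟨a * b, by push_cast; rfl⟩

lemma IsRat.div {x y : ℝ} (hx : IsRat x) (hy : IsRat y) : IsRat (x / y) := by
  obtain ⟨a, rfl⟩ := hx
  obtain ⟨b, rfl⟩ := hy
  exact ⟨a / b, by push_cast; rfl⟩

/-- `ℚ`-linear functionals on `ℝ` that kill `1` detect irrationality. -/
lemma isRat_of_forall_dual {c : ℝ} (h : ∀ φ : ℝ →ₗ[ℚ] ℚ, φ 1 = 0 → φ c = 0) : IsRat c := by
  by_contra hc
  have hmem : c ∉ Submodule.span ℚ {(1 : ℝ)} := by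
    rw [Submodule.mem_span_singleton]
    rintro ⟨a, ha⟩
    exact hc ⟨a, by rw [← ha, Rat.smul_def, mul_one]⟩
  obtain ⟨φ, hφ, hle⟩ := Submodule.exists_le_ker_of_notMem hmem
  exact hφ (h φ (hle (Submodule.mem_span_singleton_self 1)))

lemma plane_norm_sq (Q : EuclideanSpace ℝ (Fin 2)) : ‖Q‖ ^ 2 = Q 0 ^ 2 + Q 1 ^ 2 := by
  rw [EuclideanSpace.real_norm_sq_eq, Fin.sum_univ_two]

lemma plane_inner (Q Q' : EuclideanSpace ℝ (Fin 2)) : ⟪Q, Q'⟫ = Q 0 * Q' 0 + Q 1 * Q' 1 := by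
  simp [PiLp.inner_apply, Fin.sum_univ_two, mul_comm]

lemma plane_det_ne_zero {P P' : EuclideanSpace ℝ (Fin 2)} (hind : LinearIndependent ℝ ![P, P']) :
    P 0 * P' 1 - P 1 * P' 0 ≠ 0 := by
  intro hd
  rw [LinearIndependent.pair_iff] at hind
  have h1 := hind (P' 1) (-P 1) (by
    ext i
    fin_cases i
    · simp; linarith
    · simp; ring)
  have h2 := hind (P' 0) (-P 0) (by
    ext i
    fin_cases i
    · simp; ring
    · simp; linarith)
  have hP : P = 0 := by
    ext i
    fin_cases i
    · simpa using h2.2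
    · simpa using h1.2
  simpa using hind 1 0 (by simp [hP])

/-- A real polynomial of degree at most two in the rational numbers `⟪Q, P⟫ - k`, `⟪Q, P'⟫ - l`
that takes rational values for `Q` in a Zariski-dense set has rational coefficients. -/
lemma coeff_isRat {S : Set (EuclideanSpace ℝ (Fin 2))} (hS : ZariskiDense S)
    {P P' : EuclideanSpace ℝ (Fin 2)} (hd : P 0 * P' 1 - P 1 * P' 0 ≠ 0) (k l : ℝ)
    (a b c d e g : ℝ)
    (h : ∀ Q ∈ S, IsRat (⟪Q, P⟫ - k) ∧ IsRat (⟪Q, P'⟫ - l) ∧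
      IsRat (a * (⟪Q, P⟫ - k) ^ 2 + b * ((⟪Q, P⟫ - k) * (⟪Q, P'⟫ - l)) + c * (⟪Q, P'⟫ - l) ^ 2
        + d * (⟪Q, P⟫ - k) + e * (⟪Q, P'⟫ - l) + g)) :
    IsRat a ∧ IsRat b ∧ IsRat c ∧ IsRat d ∧ IsRat e := by
  have key : ∀ φ : ℝ →ₗ[ℚ] ℚ, φ 1 = 0 →
      φ a = 0 ∧ φ b = 0 ∧ φ c = 0 ∧ φ d = 0 ∧ φ e = 0 := by
    intro φ hφ
    let X₁ : MvPolynomial (Fin 2) ℝ := .X 0 * .C (P 0) + .X 1 * .C (P 1) - .C k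
    let X₂ : MvPolynomial (Fin 2) ℝ := .X 0 * .C (P' 0) + .X 1 * .C (P' 1) - .C l
    let f : MvPolynomial (Fin 2) ℝ := .C (φ a : ℝ) * X₁ ^ 2 + .C (φ b : ℝ) * (X₁ * X₂)
      + .C (φ c : ℝ) * X₂ ^ 2 + .C (φ d : ℝ) * X₁ + .C (φ e : ℝ) * X₂ + .C (φ g : ℝ)
    have hf : f = 0 := by
      apply hS
      intro Q hQ
      obtain ⟨⟨r, hr⟩, ⟨t, ht⟩, ⟨w, hw⟩⟩ := h Q hQ
      rw [← hr, ← ht] at hw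
      have hφw : φ (w : ℝ) = 0 := by
        have : (w : ℝ) = w • (1 : ℝ) := by rw [Rat.smul_def, mul_one]
        rw [this, map_smul, hφ, smul_zero]
      have hcomb : a * (r : ℝ) ^ 2 + b * (r * t) + c * (t : ℝ) ^ 2 + d * r + e * t + g
          = (r ^ 2) • a + (r * t) • b + (t ^ 2) • c + r • d + t • e + g := by
        simp only [Rat.smul_def]
        push_cast
        ring
      rw [hw, hcomb] at hφw
      simp only [map_add, map_smul, smul_eq_mul] at hφw
      have hφw' : ((r ^ 2 * φ a + r * t * φ b + t ^ 2 * φ c + r * φ d + t * φ e + φ g : ℚ) : ℝ)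
          = 0 := by exact_mod_cast hφw
      rw [plane_inner] at hr ht
      simp only [f, X₁, X₂, map_add, map_sub, map_mul, map_pow, MvPolynomial.eval_X,
        MvPolynomial.eval_C]
      rw [← hr, ← ht]
      push_cast at hφw'
      linarith
    have hall : ∀ x y : ℝ, (φ a : ℝ) * x ^ 2 + φ b * (x * y) + φ c * y ^ 2 + φ d * x + φ e * y
        + φ g = 0 := by
      intro x y
      -- By Cramer's rule some point of the plane has `⟪Q, P⟫ - k = x` and `⟪Q, P'⟫ - l = y`.
      let D := P 0 * P' 1 - P 1 * P' 0
      have hv := congrArg (MvPolynomial.eval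
        ![((x + k) * P' 1 - (y + l) * P 1) / D, ((y + l) * P 0 - (x + k) * P' 0) / D]) hf
      have h1 : ((x + k) * P' 1 - (y + l) * P 1) / D * P 0
          + ((y + l) * P 0 - (x + k) * P' 0) / D * P 1 - k = x := by
        have : D ≠ 0 := hd
        field_simp
        simp only [D]
        ring
      have h2 : ((x + k) * P' 1 - (y + l) * P 1) / D * P' 0
          + ((y + l) * P 0 - (x + k) * P' 0) / D * P' 1 - l = y := by
        have : D ≠ 0 := hd
        field_simp
        simp only [D]
        ring
      simp only [f, X₁, X₂, map_add, map_sub, map_mul, map_pow, MvPolynomial.eval_X,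
        MvPolynomial.eval_C, map_zero, Matrix.cons_val_zero, Matrix.cons_val_one, h1, h2] at hv
      exact hv
    have e0 := hall 0 0
    have e1 := hall 1 0
    have e2 := hall (-1) 0
    have e3 := hall 0 1
    have e4 := hall 0 (-1)
    have e5 := hall 1 1
    refine ⟨?_, ?_, ?_, ?_, ?_⟩ <;> rw [← Rat.cast_eq_zero (α := ℝ)] <;> linarith
  exact ⟨isRat_of_forall_dual fun φ hφ => (key φ hφ).1,
    isRat_of_forall_dual fun φ hφ => (key φ hφ).2.1,
    isRat_of_forall_dual fun φ hφ => (key φ hφ).2.2.1,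
    isRat_of_forall_dual fun φ hφ => (key φ hφ).2.2.2.1,
    isRat_of_forall_dual fun φ hφ => (key φ hφ).2.2.2.2⟩

/-- Polarization: rationality of `⟪Q, P⟫` up to the shift `‖P‖² / 2`, which need not be rational. -/
lemma isRat_inner_sub {P Q : EuclideanSpace ℝ (Fin 2)} (h1 : IsRat (‖Q‖ ^ 2))
    (h2 : IsRat (‖Q - P‖ ^ 2)) : IsRat (⟪Q, P⟫ - ‖P‖ ^ 2 / 2) := by
  have h := (h1.sub h2).div (isRat_cast 2)
  rw [norm_sub_sq_real] at h
  convert h using 1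
  push_cast
  ring

lemma gram_eq (P P' : EuclideanSpace ℝ (Fin 2)) :
    ‖P‖ ^ 2 * ‖P'‖ ^ 2 - ⟪P, P'⟫ ^ 2 = (P 0 * P' 1 - P 1 * P' 0) ^ 2 := by
  rw [plane_norm_sq, plane_norm_sq, plane_inner]
  ring

/-- The vanishing of the Gram determinant of three vectors of the plane. -/
lemma gram_relation (P P' Q : EuclideanSpace ℝ (Fin 2)) :
    (‖P‖ ^ 2 * ‖P'‖ ^ 2 - ⟪P, P'⟫ ^ 2) * ‖Q‖ ^ 2
      = ‖P'‖ ^ 2 * ⟪Q, P⟫ ^ 2 - 2 * ⟪P, P'⟫ * (⟪Q, P⟫ * ⟪Q, P'⟫) + ‖P‖ ^ 2 * ⟪Q, P'⟫ ^ 2 := by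
  simp only [plane_norm_sq, plane_inner]
  ring

lemma rational_of_zariskiDense {P P' : EuclideanSpace ℝ (Fin 2)}
    (hd : P 0 * P' 1 - P 1 * P' 0 ≠ 0)
    (hJ : ZariskiDense {Q : EuclideanSpace ℝ (Fin 2) |
      IsRat (‖Q‖ ^ 2) ∧ IsRat (‖Q - P‖ ^ 2) ∧ IsRat (‖Q - P'‖ ^ 2)}) :
    IsRat (‖P‖ ^ 2) ∧ IsRat ⟪P, P'⟫ ∧ IsRat (‖P'‖ ^ 2) := by
  have hD : ‖P‖ ^ 2 * ‖P'‖ ^ 2 - ⟪P, P'⟫ ^ 2 ≠ 0 := by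
    rw [gram_eq]
    exact pow_ne_zero 2 hd
  have hN : ‖P‖ ^ 2 + ‖P'‖ ^ 2 - 2 * ⟪P, P'⟫ ≠ 0 := by
    intro h0
    have h1 : ‖P - P'‖ ^ 2 = 0 := by
      rw [norm_sub_sq_real]
      linarith
    have h2 : P = P' := by simpa [sub_eq_zero] using h1
    exact hd (by rw [h2]; ring)
  have hp : ‖P‖ ^ 2 ≠ 0 := by
    intro h0
    have h2 : P = 0 := by simpa using h0
    exact hd (by simp [h2])
  have hq : ‖P'‖ ^ 2 ≠ 0 := by
    intro h0
    have h2 : P' = 0 := by simpa using h0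
    exact hd (by simp [h2])
  have hrel := gram_relation P P'
  have hpol := fun Q h1 h2 => isRat_inner_sub (P := P) (Q := Q) h1 h2
  have hpol' := fun Q h1 h2 => isRat_inner_sub (P := P') (Q := Q) h1 h2
  have hco := coeff_isRat hJ hd (‖P‖ ^ 2 / 2) (‖P'‖ ^ 2 / 2)
  generalize ‖P‖ ^ 2 = p at *
  generalize ‖P'‖ ^ 2 = q at *
  generalize ⟪P, P'⟫ = s at *
  obtain ⟨D, hDdef⟩ : ∃ D, D = p * q - s ^ 2 := ⟨_, rfl⟩
  rw [← hDdef] at hD hrel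
  obtain ⟨ha, hb, hc, hd', he⟩ := hco (q / D) (-2 * s / D) (p / D) (q * (p - s) / D)
    (p * (q - s) / D) (p * q * (p + q - 2 * s) / (4 * D)) (by
      rintro Q ⟨h1, h2, h3⟩
      refine ⟨hpol Q h1 h2, hpol' Q h1 h3, ?_⟩
      convert h1 using 1
      have hr := hrel Q
      field_simp
      linear_combination -16 * hr)
  have hps : IsRat (p - s) := by
    convert hd'.div ha using 1
    field_simp
  have hqs : IsRat (q - s) := by
    convert he.div hc using 1
    field_simp
  have hDr : IsRat D := by
    convert (hps.add hqs).div ((ha.add hc).add hb) using 1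
    have e1 : p - s + (q - s) = p + q - 2 * s := by ring
    have e2 : q / D + p / D + -2 * s / D = (p + q - 2 * s) / D := by ring
    rw [e1, e2]
    field_simp
  have hpr : IsRat p := by
    convert hc.mul hDr using 1
    field_simp
  have hqr : IsRat q := by
    convert ha.mul hDr using 1
    field_simp
  refine ⟨hpr, ?_, hqr⟩
  convert hpr.sub hps using 1
  ring

lemma isRat_norm_sq_comb {P P' : EuclideanSpace ℝ (Fin 2)} (hp : IsRat (‖P‖ ^ 2))
    (hs : IsRat ⟪P, P'⟫) (hq : IsRat (‖P'‖ ^ 2)) (t u : ℚ) :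
    IsRat (‖(t : ℝ) • P + (u : ℝ) • P'‖ ^ 2) := by
  have h := (((isRat_cast (t ^ 2)).mul hp).add ((isRat_cast (2 * t * u)).mul hs)).add
    ((isRat_cast (u ^ 2)).mul hq)
  convert h using 1
  simp only [plane_norm_sq, plane_inner, PiLp.add_apply, PiLp.smul_apply, smul_eq_mul]
  push_cast
  ring

lemma mem_iff_rat_comb {P P' : EuclideanSpace ℝ (Fin 2)}
    (hd : P 0 * P' 1 - P 1 * P' 0 ≠ 0) (hp : IsRat (‖P‖ ^ 2))
    (hs : IsRat ⟪P, P'⟫) (hq : IsRat (‖P'‖ ^ 2)) (Q : EuclideanSpace ℝ (Fin 2)) :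
    (IsRat (‖Q‖ ^ 2) ∧ IsRat (‖Q - P‖ ^ 2) ∧ IsRat (‖Q - P'‖ ^ 2)) ↔
      ∃ t u : ℚ, Q = (t : ℝ) • P + (u : ℝ) • P' := by
  constructor
  · rintro ⟨h1, h2, h3⟩
    have hx : IsRat ⟪Q, P⟫ := by
      convert (isRat_inner_sub h1 h2).add (hp.div (isRat_cast 2)) using 1
      push_cast
      ring
    have hy : IsRat ⟪Q, P'⟫ := by
      convert (isRat_inner_sub h1 h3).add (hq.div (isRat_cast 2)) using 1
      push_cast
      ring
    have hD : IsRat (‖P‖ ^ 2 * ‖P'‖ ^ 2 - ⟪P, P'⟫ * ⟪P, P'⟫) := (hp.mul hq).sub (hs.mul hs)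
    obtain ⟨t, ht⟩ := ((hq.mul hx).sub (hs.mul hy)).div hD
    obtain ⟨u, hu⟩ := ((hp.mul hy).sub (hs.mul hx)).div hD
    refine ⟨t, u, ?_⟩
    rw [← sq, gram_eq] at ht hu
    simp only [plane_norm_sq, plane_inner] at ht hu
    rw [ht, hu]
    ext i
    fin_cases i
    · simp only [Fin.zero_eta, PiLp.add_apply, PiLp.smul_apply, smul_eq_mul]
      rw [div_mul_eq_mul_div, div_mul_eq_mul_div, ← add_div, eq_div_iff (pow_ne_zero 2 hd)]
      ring
    · simp only [Fin.mk_one, PiLp.add_apply, PiLp.smul_apply, smul_eq_mul]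
      rw [div_mul_eq_mul_div, div_mul_eq_mul_div, ← add_div, eq_div_iff (pow_ne_zero 2 hd)]
      ring
  · rintro ⟨t, u, rfl⟩
    refine ⟨isRat_norm_sq_comb hp hs hq t u, ?_, ?_⟩
    · convert isRat_norm_sq_comb hp hs hq (t - 1) u using 3
      push_cast
      module
    · convert isRat_norm_sq_comb hp hs hq t (u - 1) using 3
      push_cast
      module

/-- The rational span of a basis of the plane is Zariski-dense, being dense in the usual topology. -/
lemma zariskiDense_rat_comb {P P' : EuclideanSpace ℝ (Fin 2)}
    (hd : P 0 * P' 1 - P 1 * P' 0 ≠ 0) :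
    ZariskiDense {Q : EuclideanSpace ℝ (Fin 2) | ∃ t u : ℚ, Q = (t : ℝ) • P + (u : ℝ) • P'} := by
  intro f hf
  let F : ℝ × ℝ → ℝ := fun z =>
    MvPolynomial.eval (fun i => (z.1 • P + z.2 • P') i) f
  have hF : Continuous F :=
    (MvPolynomial.continuous_eval f).comp (by
      refine continuous_pi fun i => ?_
      simp only [PiLp.add_apply, PiLp.smul_apply, smul_eq_mul]
      fun_prop)
  have hdense : DenseRange (Prod.map ((↑) : ℚ → ℝ) ((↑) : ℚ → ℝ)) :=
    Rat.denseRange_cast.prodMap Rat.denseRange_cast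
  have hzero : F = fun _ => 0 :=
    hdense.equalizer hF continuous_const (funext fun z => hf _ ⟨z.1, z.2, rfl⟩)
  apply MvPolynomial.funext
  intro x
  rw [map_zero]
  have h := congrFun hzero ((x 0 * P' 1 - x 1 * P' 0) / (P 0 * P' 1 - P 1 * P' 0),
    (x 1 * P 0 - x 0 * P 1) / (P 0 * P' 1 - P 1 * P' 0))
  simp only [F] at h
  convert h using 2
  congr 1
  ext i
  fin_cases i
  · simp only [Fin.zero_eta, PiLp.add_apply, PiLp.smul_apply, smul_eq_mul]
    rw [div_mul_eq_mul_div, div_mul_eq_mul_div, ← add_div, eq_div_iff hd]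
    ring
  · simp only [Fin.mk_one, PiLp.add_apply, PiLp.smul_apply, smul_eq_mul]
    rw [div_mul_eq_mul_div, div_mul_eq_mul_div, ← add_div, eq_div_iff hd]
    ring

theorem rational_squared_distances_noncollinear_case
    (P P' : EuclideanSpace ℝ (Fin 2)) (hind : LinearIndependent ℝ ![P, P'])
    (J : Set (EuclideanSpace ℝ (Fin 2)))
    (hJ : J = {Q : EuclideanSpace ℝ (Fin 2) |
      IsRat (‖Q‖ ^ 2) ∧ IsRat (‖Q - P‖ ^ 2) ∧ IsRat (‖Q - P'‖ ^ 2)}) :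
    (ZariskiDense J ↔ (IsRat (‖P‖ ^ 2) ∧ IsRat (⟪P, P'⟫) ∧ IsRat (‖P'‖ ^ 2))) ∧
    ((IsRat (‖P‖ ^ 2) ∧ IsRat (⟪P, P'⟫) ∧ IsRat (‖P'‖ ^ 2)) →
      (J = {Q : EuclideanSpace ℝ (Fin 2) | ∃ t u : ℚ, Q = (t : ℝ) • P + (u : ℝ) • P'} ∧
       (∃ R ∈ J, ⟪P, R⟫ = 0 ∧ IsRat (‖R‖ ^ 2) ∧
          J = {Q : EuclideanSpace ℝ (Fin 2) | ∃ t u : ℚ, Q = (t : ℝ) • P + (u : ℝ) • R}) ∧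
       (∀ Q ∈ J, ∀ Q' ∈ J, IsRat (‖Q - Q'‖ ^ 2)))) := by
  have hd := plane_det_ne_zero hind
  subst hJ
  have hset (hp : IsRat (‖P‖ ^ 2)) (hs : IsRat ⟪P, P'⟫) (hq : IsRat (‖P'‖ ^ 2)) :=
    Set.ext (mem_iff_rat_comb hd hp hs hq)
  refine ⟨⟨rational_of_zariskiDense hd, ?_⟩, ?_⟩
  · rintro ⟨hp, hs, hq⟩
    have hz := zariskiDense_rat_comb hd
    rwa [← hset hp hs hq] at hz
  · rintro ⟨hp, hs, hq⟩
    have hJ := hset hp hs hq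
    rw [hJ]
    refine ⟨rfl, ?_, ?_⟩
    · have hp0 : ‖P‖ ^ 2 ≠ 0 := by
        intro h0
        have h2 : P = 0 := by simpa using h0
        exact hd (by simp [h2])
      obtain ⟨c, hc⟩ := hs.div hp
      have hR : P' - (c : ℝ) • P = ((-c : ℚ) : ℝ) • P + ((1 : ℚ) : ℝ) • P' := by
        push_cast
        module
      refine ⟨P' - (c : ℝ) • P, ⟨-c, 1, hR⟩, ?_, ?_, ?_⟩
      · rw [inner_sub_right, inner_smul_right, real_inner_self_eq_norm_sq, hc, div_mul_cancel₀ _ hp0,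
          sub_self]
      · rw [hR]
        exact isRat_norm_sq_comb hp hs hq _ _
      · ext Q
        constructor
        · rintro ⟨t, u, rfl⟩
          refine ⟨t + u * c, u, ?_⟩
          push_cast
          module
        · rintro ⟨t, u, rfl⟩
          refine ⟨t - u * c, u, ?_⟩
          push_cast
          module
    · rintro _ ⟨t, u, rfl⟩ _ ⟨t', u', rfl⟩
      convert isRat_norm_sq_comb hp hs hq (t - t') (u - u') using 3
      push_cast
      module
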